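/- Let (C_1, …, C_n) be a torsion n-tuple in an abelian category C, let 1 ≤ i ≤ n, and let (D_1, …, D_m) be a torsion m-tuple in C_i, meaning: each D_j is a class of objects of C_i closed under isomorphism, Hom(A, B) = 0 whenever A ∈ D_j, B ∈ D_k with j < k, and every object of C_i admits a filtration 0 = X_0 ≤ X_1 ≤ … ≤ X_m = X by subobjects with X_j/X_{j−1} ∈ D_j for all j. Then (C_1, …, C_{i−1}, D_1, …, D_m, C_{i+1}, …, C_n) is a torsion (n+m−1)-tuple in C. -/

import Mathlib

open CategoryTheory CategoryTheory.Limits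

universe u v

variable {C : Type u} [Category.{v} C] [Abelian C]

/-- A class of objects is closed under isomorphism. -/
def IsoClosed (S : Set C) : Prop :=
  ∀ ⦃X Y : C⦄, (X ≅ Y) → X ∈ S → Y ∈ S

/-- A torsion pair `(𝒯, ℱ)` in an abelian category: both classes are closed under
isomorphism, there are no nonzero morphisms from `𝒯` to `ℱ`, and every object `X` fits
into a short exact sequence `0 → T → X → F → 0` with `T ∈ 𝒯`, `F ∈ ℱ`. -/
structure IsTorsionPair (𝒯 ℱ : Set C) : Prop where
  isoClosed_torsion : IsoClosed 𝒯
  isoClosed_free : IsoClosed ℱ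
  hom_zero : ∀ ⦃X Y : C⦄, X ∈ 𝒯 → Y ∈ ℱ → ∀ f : X ⟶ Y, f = 0
  exists_ses : ∀ X : C, ∃ (T F : C) (i : T ⟶ X) (p : X ⟶ F) (w : i ≫ p = 0),
    T ∈ 𝒯 ∧ F ∈ ℱ ∧ (ShortComplex.mk i p w).ShortExact


/-- There are no nonzero morphisms from objects of `𝒮` to objects of `𝒯`. -/
def HomOrth (𝒮 𝒯 : Set C) : Prop :=
  ∀ ⦃X Y : C⦄, X ∈ 𝒮 → Y ∈ 𝒯 → ∀ f : X ⟶ Y, f = 0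

/-- `FiltClass [C₁, …, Cₖ]` is the class of objects `X` admitting a filtration
`0 = X₀ ≤ X₁ ≤ … ≤ Xₖ = X` with `Xⱼ/Xⱼ₋₁ ∈ Cⱼ`, expressed recursively: `X` sits in a
short exact sequence `0 → A → X → B → 0` with `A ∈ C₁` and `B` filtered by the rest. -/
def FiltClass : List (Set C) → Set C
  | [] => {X : C | IsZero X}
  | 𝒮 :: rest => {X : C | ∃ (A B : C) (i : A ⟶ X) (p : X ⟶ B) (w : i ≫ p = 0),
      A ∈ 𝒮 ∧ B ∈ FiltClass rest ∧ (ShortComplex.mk i p w).ShortExact}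

/-- A torsion `n`-tuple `(C₁, …, Cₙ)` in an abelian category, given as a list of classes
of objects: each class is closed under isomorphism, `Hom(Cᵢ, Cⱼ) = 0` for `i < j`, and
every object of `C` admits a filtration with subsequent quotients in `C₁, …, Cₙ`. -/
structure IsTorsionTuple (L : List (Set C)) : Prop where
  isoClosed : ∀ S ∈ L, IsoClosed S
  homOrth : L.Pairwise HomOrth
  filt_univ : FiltClass L = Set.univ

/-!
The point is that an extension of an `M`-filtered object `B` by an `L`-filtered object `A` is
`L ++ M`-filtered. If `A₁ ≤ A` is the first step of the filtration of `A` and `A ≤ X` has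
quotient `B`, then pushing `A ⟶ X` out along `A ⟶ A/A₁` gives `X/A₁` as an extension of `B` by
`A/A₁`, and one concludes by induction on `L`. Applied to the step of the filtration lying in `S`,
this refines it to a filtration by `D`.
-/

section ShortExact

variable {S : ShortComplex C}

theorem shortExact_of_isPushout (hS : S.ShortExact) {A Y : C} {q : S.X₁ ⟶ A} {r : S.X₂ ⟶ Y}
    {f : A ⟶ Y} (sq : IsPushout S.f q r f) :
    (ShortComplex.mk f (sq.desc S.g 0 (by simp)) (by simp)).ShortExact := by
  have : Epi S.g := hS.epi_g
  have mono_f : Mono f := (MorphismProperty.monomorphisms C).of_isPushout sq.flip hS.mono_f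
  have epi_desc : Epi (sq.desc S.g 0 (by simp)) := epi_of_epi_fac (sq.inl_desc S.g 0 (by simp))
  have isCokernel : IsColimit (CokernelCofork.ofπ (f := f) (sq.desc S.g 0 (by simp)) (by simp)) :=
    CokernelCofork.IsColimit.ofπ' _ _ fun k hk ↦ by
      have hfrk : S.f ≫ r ≫ k = 0 := by rw [sq.w_assoc, hk, comp_zero]
      exact ⟨hS.exact.desc (r ≫ k) hfrk, sq.hom_ext (by simp) (by simp [hk])⟩
  exact .mk' (ShortComplex.exact_of_g_is_cokernel _ isCokernel) mono_f epi_desc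

theorem shortExact_comp_of_isPushout (hS : S.ShortExact) {X Y : C} {i : S.X₂ ⟶ X} [Mono i]
    {r : X ⟶ Y} {f : S.X₃ ⟶ Y} (sq : IsPushout i S.g r f) :
    (ShortComplex.mk (S.f ≫ i) r (by simp [sq.w])).ShortExact := by
  have : Mono S.f := hS.mono_f
  have : Epi S.g := hS.epi_g
  have epi_r : Epi r := sq.epi_inl_of_epi
  have isCokernel : IsColimit (CokernelCofork.ofπ (f := S.f ≫ i) r (by simp [sq.w])) :=
    CokernelCofork.IsColimit.ofπ' _ _ fun k hk ↦ by
      have hfik : S.f ≫ i ≫ k = 0 := by rw [← Category.assoc, hk]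
      exact ⟨sq.desc k (hS.exact.desc (i ≫ k) hfik) (by simp), by simp⟩
  exact .mk' (ShortComplex.exact_of_g_is_cokernel _ isCokernel) (mono_comp S.f i) epi_r

end ShortExact

theorem HomOrth.mono {𝒮 𝒮' 𝒯 𝒯' : Set C} (h : HomOrth 𝒮 𝒯) (h𝒮 : 𝒮' ⊆ 𝒮) (h𝒯 : 𝒯' ⊆ 𝒯) :
    HomOrth 𝒮' 𝒯' :=
  fun _ _ hX hY ↦ h (h𝒮 hX) (h𝒯 hY)

theorem pairwise_homOrth_substitute {L₁ L₂ D : List (Set C)} {S : Set C}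
    (h : (L₁ ++ S :: L₂).Pairwise HomOrth) (hDS : ∀ T ∈ D, T ⊆ S) (hD : D.Pairwise HomOrth) :
    (L₁ ++ D ++ L₂).Pairwise HomOrth := by
  simp only [List.pairwise_append, List.pairwise_cons, List.mem_append, List.mem_cons] at h ⊢
  obtain ⟨hL₁, ⟨hSL₂, hL₂⟩, hL₁SL₂⟩ := h
  have hL₁D : ∀ U ∈ L₁, ∀ T ∈ D, HomOrth U T := fun U hU T hT ↦
    (hL₁SL₂ U hU S (.inl rfl)).mono subset_rfl (hDS T hT)
  have hDL₂ : ∀ T ∈ D, ∀ V ∈ L₂, HomOrth T V := fun T hT V hV ↦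
    (hSL₂ V hV).mono (hDS T hT) subset_rfl
  refine ⟨⟨hL₁, hD, hL₁D⟩, hL₂, ?_⟩
  rintro U (hU | hU) V hV
  · exact hL₁SL₂ U hU V (.inr hV)
  · exact hDL₂ U hU V hV

theorem isoClosed_filtClass (L : List (Set C)) : IsoClosed (FiltClass L) := by
  intro X Y e hX
  cases L with
  | nil => exact IsZero.of_iso hX e.symm
  | cons 𝒮 L =>
    obtain ⟨A, B, i, p, w, hA, hB, hs⟩ := hX
    exact ⟨A, B, i ≫ e.hom, e.inv ≫ p, by simp [w], hA, hB,
      ShortComplex.shortExact_of_iso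
        (ShortComplex.isoMk (Iso.refl A) e (Iso.refl B) (by simp) (by simp)) hs⟩

theorem mem_filtClass_append_of_shortExact {L M : List (Set C)} {S : ShortComplex C}
    (hS : S.ShortExact) (h₁ : S.X₁ ∈ FiltClass L) (h₃ : S.X₃ ∈ FiltClass M) :
    S.X₂ ∈ FiltClass (L ++ M) := by
  induction L generalizing S with
  | nil =>
    have : IsIso S.g := hS.isIso_g_iff.2 h₁
    exact isoClosed_filtClass M (asIso S.g).symm h₃
  | cons 𝒮 L ih =>
    obtain ⟨A₁, A₂, j, q, w, hA₁, hA₂, hjq⟩ := h₁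
    have : Mono S.f := hS.mono_f
    have sq : IsPushout S.f q (pushout.inl S.f q) (pushout.inr S.f q) := .of_hasPushout _ _
    exact ⟨A₁, pushout S.f q, j ≫ S.f, pushout.inl S.f q, _, hA₁,
      ih (shortExact_of_isPushout hS sq) hA₂ h₃, shortExact_comp_of_isPushout hjq sq⟩

theorem filtClass_append_subset_append_left (L : List (Set C)) {M M' : List (Set C)}
    (h : FiltClass M ⊆ FiltClass M') : FiltClass (L ++ M) ⊆ FiltClass (L ++ M') := by
  induction L with
  | nil => exact h
  | cons 𝒮 L ih =>
    rintro X ⟨A, B, i, p, w, hA, hB, hs⟩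
    exact ⟨A, B, i, p, w, hA, ih hB, hs⟩

theorem filtClass_subset_substitute {L₁ L₂ D : List (Set C)} {S : Set C}
    (hD : S ⊆ FiltClass D) : FiltClass (L₁ ++ S :: L₂) ⊆ FiltClass (L₁ ++ D ++ L₂) := by
  rw [List.append_assoc]
  refine filtClass_append_subset_append_left L₁ ?_
  rintro X ⟨A, B, i, p, w, hA, hB, hs⟩
  exact mem_filtClass_append_of_shortExact hs (hD hA) hB

/-- Substituting a torsion `m`-tuple `(D₁, …, Dₘ)` of the class `Cᵢ = S` (each `Dⱼ` a class
of objects of the full subcategory `S`, closed under isomorphism, with `Hom(Dⱼ, Dₖ) = 0`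
for `j < k`, and every object of `S` filtered with quotients in `D₁, …, Dₘ`) into a torsion
`n`-tuple `(C₁, …, Cᵢ₋₁, S, Cᵢ₊₁, …, Cₙ)` yields the torsion `(n + m - 1)`-tuple
`(C₁, …, Cᵢ₋₁, D₁, …, Dₘ, Cᵢ₊₁, …, Cₙ)`. -/
theorem stmt4 {L₁ L₂ : List (Set C)} {S : Set C}
    (h : IsTorsionTuple (L₁ ++ S :: L₂))
    (D : List (Set C))
    (hDsub : ∀ T ∈ D, T ⊆ S)
    (hDiso : ∀ T ∈ D, IsoClosed T)
    (hDorth : D.Pairwise HomOrth)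
    (hDfilt : ∀ X ∈ S, X ∈ FiltClass D) :
    IsTorsionTuple (L₁ ++ D ++ L₂) := by
  refine ⟨fun T hT ↦ ?_, pairwise_homOrth_substitute h.homOrth hDsub hDorth, ?_⟩
  · rcases List.mem_append.1 hT with hT | hT
    · rcases List.mem_append.1 hT with hT | hT
      · exact h.isoClosed T (List.mem_append_left _ hT)
      · exact hDiso T hT
    · exact h.isoClosed T (List.mem_append_right _ (List.mem_cons_of_mem S hT))
  · exact Set.univ_subset_iff.1 (h.filt_univ ▸ filtClass_subset_substitute hDfilt)
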